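/- arXiv:1601.05480 — 3 statements merged into one kernel-verified Lean document; each statement's English description precedes it below -/
import Mathlib

section
/- Let c ∈ ℝ and let f_i(x) = a_i x + b_i (i ∈ [n]) be monotone nondecreasing linear functions, none of which is the identity (a_i ≥ 0 and (a_i, b_i) ≠ (1, 0)), and let f̄_i(x) = max{f_i(x), x}. Let σ be a permutation of [n] compatible with the lexicographic order with respect to (δ(f_i), γ(f_i)). Then f̄_{σ(n)}∘⋯∘f̄_{σ(1)}(c) equals the maximum over all permutations τ of [n] and all integers 0 ≤ k ≤ n of f_{τ(k)}∘⋯∘f_{τ(1)}(c); in particular, σ is optimal for the maximum total composition ordering problem ((f̄_i)_{i∈[n]}, c). -/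
/-!
The point is a pairwise exchange inequality. Since every `fᵢ` is nondecreasing,
`f̄ⱼ (f̄ᵢ x)` is the maximum of `fⱼ (fᵢ x)`, `fⱼ x`, `fᵢ x` and `x`, so if `(δ, γ)` of `fᵢ` is
lexicographically at most that of `fⱼ`, then `f̄ᵢ (f̄ⱼ x) ≤ f̄ⱼ (f̄ᵢ x)` follows from a bound on
`fᵢ (fⱼ x)` (`exchange_bar`). When the `δ`-values agree, the bound is `fᵢ ∘ fⱼ ≤ fⱼ ∘ fᵢ`, because
the difference is `bⱼ (1 - aᵢ) - bᵢ (1 - aⱼ)`, whose sign is governed by the fixed points. When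
`aᵢ < 1 ≤ aⱼ`, the functions `fᵢ` and `fⱼ` are respectively contracting and expanding.

An insertion-sort argument (`foldl_le_of_perm`) turns the exchange inequality into optimality of
`σ` for the total problem. Partial compositions of the `fᵢ` are dominated by total compositions of
the `f̄ᵢ`; conversely a composition of the `f̄ᵢ` is a composition of the `fᵢ` along the sublist of
indices at which the maximum is attained by `fᵢ` (`exists_sublist_foldl_eq`), and this sublist can
be made an initial segment of a permutation.
-/

/-- `compSeq f σ k c = f (σ k) ∘ ⋯ ∘ f (σ 1) (c)` (0-indexed: applies `f (σ 0)` first). -/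
def compSeq {n : ℕ} (f : Fin n → ℝ → ℝ) (σ : Fin n → Fin n) (k : ℕ) (c : ℝ) : ℝ :=
  (((List.finRange n).take k).map σ).foldl (fun x i => f i x) c

/-- `γ` of the linear function `x ↦ a x + b`: the fixed point `b / (1 - a)` if `a ≠ 1`,
`+∞` if `a = 1` and `b < 0`, `-∞` if `a = 1` and `b ≥ 0`. -/
noncomputable def gam (a b : ℝ) : EReal :=
  if a = 1 then (if b < 0 then (⊤ : EReal) else (⊥ : EReal))
  else ((b / (1 - a) : ℝ) : EReal)

/-- `δ` of the linear function `x ↦ a x + b`: `+1` if `a ≥ 1`, `-1` if `a < 1`. -/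
noncomputable def del (a : ℝ) : ℤ := if 1 ≤ a then 1 else -1

/-- The sign condition equivalent to `fᵢ ∘ fⱼ ≤ fⱼ ∘ fᵢ`, for two functions with the same `δ`. -/
lemma commutator_nonneg {a b a' b' : ℝ}
    (hδ : del a = del a') (hγ : gam a b ≤ gam a' b') :
    b * (1 - a') ≤ b' * (1 - a) := by
  have hs : 1 ≤ a ↔ 1 ≤ a' := by
    unfold del at hδ
    split_ifs at hδ with h h' h'
    · exact ⟨fun _ => h', fun _ => h⟩
    · exact ⟨fun k => absurd k h, fun k => absurd k h'⟩
  unfold gam at hγ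
  by_cases h1 : a = 1
  · subst h1
    have ha' : 1 ≤ a' := hs.1 le_rfl
    by_cases h2 : a' = 1
    · subst h2; simp
    · by_cases h3 : b < 0
      · simp [h2, h3] at hγ
      · have : 0 ≤ b := not_lt.1 h3
        nlinarith
  · by_cases h2 : a' = 1
    · subst h2
      have ha : 1 ≤ a := hs.2 le_rfl
      by_cases h3 : b' < 0
      · nlinarith
      · simp [h1, h3] at hγ
    · simp only [h1, h2, if_false, EReal.coe_le_coe_iff] at hγ
      have e : b / (1 - a) * ((1 - a) * (1 - a')) = b * (1 - a') := by
        have : 1 - a ≠ 0 := sub_ne_zero.2 (Ne.symm h1)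
        field_simp
      have e' : b' / (1 - a') * ((1 - a) * (1 - a')) = b' * (1 - a) := by
        have : 1 - a' ≠ 0 := sub_ne_zero.2 (Ne.symm h2)
        field_simp
      have hpos : 0 ≤ (1 - a) * (1 - a') := by
        by_cases h : 1 ≤ a
        · have := hs.1 h
          nlinarith
        · have h' : ¬ 1 ≤ a' := fun k => h (hs.2 k)
          push Not at h h'
          nlinarith
      rw [← e, ← e']
      exact mul_le_mul_of_nonneg_right hγ hpos

/-- The exchange inequality: applying first the function whose `(δ, γ)` is lexicographically
smaller is at least as good. -/
lemma exchange_bar {a b a' b' : ℝ} (ha : 0 ≤ a) (ha' : 0 ≤ a') 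
    (h : del a < del a' ∨ (del a = del a' ∧ gam a b ≤ gam a' b')) (x : ℝ) :
    max (a * max (a' * x + b') x + b) (max (a' * x + b') x) ≤
      max (a' * max (a * x + b) x + b') (max (a * x + b) x) := by
  have key : a * (a' * x + b') + b ≤
      max (a' * (a * x + b) + b') (max (a' * x + b') (max (a * x + b) x)) := by
    rcases h with h | ⟨h, hγ⟩
    · have h1 : a < 1 ∧ 1 ≤ a' := by
        unfold del at h
        split_ifs at h with p q q
        · norm_num at h
        · norm_num at h
        · exact ⟨not_le.1 p, q⟩
        · norm_num at h
      obtain ⟨p, q⟩ := h1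
      by_cases c1 : a' * x + b' ≤ x
      · refine le_max_of_le_right (le_max_of_le_right (le_max_of_le_left ?_))
        nlinarith
      by_cases c2 : a * (a' * x + b') + b ≤ a' * x + b'
      · exact le_max_of_le_right (le_max_of_le_left c2)
      -- With `y = fⱼ x > x` and `fᵢ y > y`, also `fᵢ x > x`; now `fⱼ` expands the step from `x` to
      -- `fᵢ x`, while `fᵢ` contracts the step from `x` to `y`.
      push Not at c1 c2
      refine le_max_of_le_left ?_
      have c3 : x < a * x + b := by nlinarith
      have c4 : 0 ≤ (a' - 1) * (a * x + b - x) :=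
        mul_nonneg (by linarith) (by linarith)
      have c5 : 0 ≤ (1 - a) * (a' * x + b' - x) :=
        mul_nonneg (by linarith) (by linarith)
      nlinarith
    · refine le_max_of_le_left ?_
      have := commutator_nonneg h hγ
      linarith
  have m1 : a' * (a * x + b) ≤ a' * max (a * x + b) x :=
    mul_le_mul_of_nonneg_left (le_max_left _ _) ha'
  have m2 : a' * x ≤ a' * max (a * x + b) x :=
    mul_le_mul_of_nonneg_left (le_max_right _ _) ha'
  have r1 := le_max_left (a' * max (a * x + b) x + b') (max (a * x + b) x)
  have r2 := le_max_right (a' * max (a * x + b) x + b') (max (a * x + b) x)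
  have r3 := le_max_left (a * x + b) x
  have r4 := le_max_right (a * x + b) x
  refine max_le ?_ (max_le (by linarith) (by linarith))
  rcases max_choice (a' * x + b') x with e | e
  · rw [e]
    exact key.trans (max_le (by linarith) (max_le (by linarith) r2))
  · rw [e]
    linarith

section Fold

variable {ι : Type*} (g : ι → ℝ → ℝ)

lemma foldl_mono (hg : ∀ i, Monotone (g i)) (l : List ι) :
    Monotone (fun x => l.foldl (fun x i => g i x) x) := by
  induction l with
  | nil => exact fun _ _ h => h
  | cons i t ih => exact fun x y h => ih (hg i h)

/-- Moving a function to the front of a composition increases the result if each of the functions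
it passes would rather be applied after it. -/
lemma foldl_move_front (hg : ∀ i, Monotone (g i)) (i : ι) (p q : List ι)
    (h : ∀ j ∈ p, ∀ x, g i (g j x) ≤ g j (g i x)) (x : ℝ) :
    (p ++ i :: q).foldl (fun x i => g i x) x ≤ (i :: (p ++ q)).foldl (fun x i => g i x) x := by
  induction p generalizing x with
  | nil => exact le_rfl
  | cons j p ih =>
    refine (ih (fun k hk => h k (List.mem_cons_of_mem _ hk)) (g j x)).trans ?_
    exact foldl_mono g hg (p ++ q) (h j List.mem_cons_self x)

/-- A list sorted with respect to the exchange relation maximises the composition among all its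
rearrangements. -/
lemma foldl_le_of_perm (hg : ∀ i, Monotone (g i)) (l l' : List ι) (hp : l'.Perm l)
    (hl : l.Pairwise fun i j => ∀ x, g i (g j x) ≤ g j (g i x)) (x : ℝ) :
    l'.foldl (fun x i => g i x) x ≤ l.foldl (fun x i => g i x) x := by
  induction l generalizing l' x with
  | nil => rw [List.perm_nil.1 hp]
  | cons i t ih =>
    obtain ⟨p, q, rfl⟩ := List.append_of_mem (hp.mem_iff.2 List.mem_cons_self)
    have hpq : (p ++ q).Perm t := (List.perm_middle.symm.trans hp).cons_inv
    rw [List.pairwise_cons] at hl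
    refine (foldl_move_front g hg i p q (fun j hj => hl.1 j ?_) x).trans (ih _ hpq hl.2 _)
    exact hpq.mem_iff.1 (List.mem_append_left _ hj)

lemma foldl_le_foldl_bar (hg : ∀ i, Monotone (g i)) (l : List ι) (x y : ℝ) (hxy : x ≤ y) :
    l.foldl (fun x i => g i x) x ≤ l.foldl (fun x i => max (g i x) x) y := by
  induction l generalizing x y with
  | nil => exact hxy
  | cons i t ih => exact ih _ _ ((hg i hxy).trans (le_max_left _ _))

lemma le_foldl_bar (l : List ι) (x : ℝ) : x ≤ l.foldl (fun x i => max (g i x) x) x := by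
  induction l generalizing x with
  | nil => exact le_rfl
  | cons i t ih => exact (le_max_right _ _).trans (ih _)

/-- Keeping exactly the indices at which the maximum is not attained by the identity realises the
composition of the `max (g i x) x` as a composition of some of the `g i`. -/
lemma exists_sublist_foldl_eq (l : List ι) (x : ℝ) :
    ∃ s : List ι, s.Sublist l ∧
      s.foldl (fun x i => g i x) x = l.foldl (fun x i => max (g i x) x) x := by
  induction l generalizing x with
  | nil => exact ⟨[], List.Sublist.refl _, rfl⟩
  | cons i t ih =>
    obtain ⟨s, hs, e⟩ := ih (max (g i x) x)
    rcases max_choice (g i x) x with h | h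
    · refine ⟨i :: s, hs.cons_cons i, ?_⟩
      rw [List.foldl_cons, List.foldl_cons, ← e, h]
    · refine ⟨s, hs.cons i, ?_⟩
      rw [List.foldl_cons, ← e, h]

end Fold

lemma exists_perm_map_eq {n : ℕ} (l : List (Fin n)) (h : l.Perm (List.finRange n)) :
    ∃ τ : Equiv.Perm (Fin n), (List.finRange n).map τ = l := by
  have hlen : l.length = n := by simpa using h.length_eq
  have hnd : l.Nodup := h.nodup_iff.2 (List.nodup_finRange n)
  let t : Fin n → Fin n := fun i => l[i.1]'(by omega)
  have ht : Function.Injective t := by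
    intro i j hij
    exact Fin.ext ((hnd.getElem_inj_iff).1 hij)
  refine ⟨Equiv.ofBijective t (Finite.injective_iff_bijective.1 ht), ?_⟩
  apply List.ext_getElem
  · simp [hlen]
  · intro i h1 h2
    simp [t]

/-- If `σ` is compatible with the lexicographic order on `(δ(fᵢ), γ(fᵢ))`, then the total
composition of the `f̄ᵢ` under `σ` attains the maximum of the partial composition ordering
problem for the `fᵢ`; in particular `σ` is optimal for the total problem for the `f̄ᵢ`. -/
theorem stmt8 (n : ℕ) (c : ℝ) (a b : Fin n → ℝ) (ha : ∀ i, 0 ≤ a i)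
    (hnid : ∀ i, (a i, b i) ≠ (1, 0)) (σ : Equiv.Perm (Fin n))
    (hcompat : ∀ i j : Fin n, i < j →
      del (a (σ i)) < del (a (σ j)) ∨
        (del (a (σ i)) = del (a (σ j)) ∧
          gam (a (σ i)) (b (σ i)) ≤ gam (a (σ j)) (b (σ j)))) :
    (∀ (τ : Equiv.Perm (Fin n)) (k : ℕ), k ≤ n →
      compSeq (fun i x => a i * x + b i) τ k c ≤
        compSeq (fun i x => max (a i * x + b i) x) σ n c) ∧
    (∃ (τ : Equiv.Perm (Fin n)) (k : ℕ), k ≤ n ∧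
      compSeq (fun i x => a i * x + b i) τ k c =
        compSeq (fun i x => max (a i * x + b i) x) σ n c) ∧
    (∀ τ : Equiv.Perm (Fin n),
      compSeq (fun i x => max (a i * x + b i) x) τ n c ≤
        compSeq (fun i x => max (a i * x + b i) x) σ n c) := by
  have hmono : ∀ i, Monotone (fun x : ℝ => a i * x + b i) := fun i x y h => by
    have := mul_le_mul_of_nonneg_left h (ha i)
    simpa using this
  have hmono' : ∀ i, Monotone (fun x : ℝ => max (a i * x + b i) x) := fun i =>
    (hmono i).max monotone_id
  have hperm : ∀ τ : Equiv.Perm (Fin n), ((List.finRange n).map τ).Perm (List.finRange n) :=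
    fun τ => Equiv.Perm.map_finRange_perm τ
  have htake : (List.finRange n).take n = List.finRange n := List.take_of_length_le (by simp)
  have htotal : ∀ τ : Equiv.Perm (Fin n),
      compSeq (fun i x => max (a i * x + b i) x) τ n c ≤
        compSeq (fun i x => max (a i * x + b i) x) σ n c := by
    intro τ
    unfold compSeq
    rw [htake]
    refine foldl_le_of_perm _ hmono' _ _ ((hperm τ).trans (hperm σ).symm) ?_ c
    rw [List.pairwise_map]
    refine (List.pairwise_lt_finRange n).imp fun {i j} hij x => ?_
    exact exchange_bar (ha _) (ha _) (hcompat i j hij) x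
  refine ⟨fun τ k _ => ?_, ?_, htotal⟩
  · refine le_trans ?_ (htotal τ)
    unfold compSeq
    rw [htake]
    conv_rhs => rw [← List.take_append_drop k (List.finRange n), List.map_append,
      List.foldl_append]
    exact (foldl_le_foldl_bar (fun i x => a i * x + b i) hmono _ c c le_rfl).trans
      (le_foldl_bar (fun i x => a i * x + b i) _ _)
  · obtain ⟨s, hs, e⟩ :=
      exists_sublist_foldl_eq (fun i x => a i * x + b i) ((List.finRange n).map σ) c
    obtain ⟨t, ht⟩ := hs.exists_perm_append
    obtain ⟨τ, hτ⟩ := exists_perm_map_eq (s ++ t) (ht.symm.trans (hperm σ))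
    refine ⟨τ, s.length, by simpa using hs.length_le, ?_⟩
    unfold compSeq
    rw [htake, List.map_take, hτ, List.take_left]
    exact e
end

section
/- Let f_i(x) = a_i x + b_i and f_j(x) = a_j x + b_j be monotone nondecreasing linear functions that are not the identity (a_i, a_j ≥ 0, (a_i, b_i), (a_j, b_j) ≠ (1, 0)). Then: (a) if γ(f_i) = γ(f_j) and f_j∘f_i is not the identity function, then γ(f_j∘f_i) = γ(f_i) = γ(f_j); (b) if γ(f_i) < γ(f_j) and a_i, a_j ≥ 1, then γ(f_i) ≤ γ(f_j∘f_i) ≤ γ(f_j); (c) if γ(f_i) < γ(f_j) and a_i, a_j < 1, then γ(f_i) ≤ γ(f_j∘f_i) ≤ γ(f_j); (d) if γ(f_i) < γ(f_j), a_i < 1 ≤ a_j, and a_i·a_j ≥ 1, then γ(f_j∘f_i) ≥ γ(f_j); (e) if γ(f_i) < γ(f_j), a_i < 1 ≤ a_j, and a_i·a_j < 1, then γ(f_j∘f_i) ≤ γ(f_i); (f) if γ(f_i) < γ(f_j), a_i ≥ 1 > a_j, and a_i·a_j ≥ 1, then γ(f_j∘f_i) ≤ γ(f_i); (g) if γ(f_i)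 < γ(f_j), a_i ≥ 1 > a_j, and a_i·a_j < 1, then γ(f_j∘f_i) ≥ γ(f_j). -/
theorem gam_one_of_neg {b : ℝ} (hb : b < 0) : gam 1 b = ⊤ := by simp [gam, hb]

theorem gam_one_of_nonneg {b : ℝ} (hb : 0 ≤ b) : gam 1 b = ⊥ := by simp [gam, not_lt.mpr hb]

theorem gam_of_fixed {a : ℝ} (p : ℝ) (ha : a ≠ 1) : gam a (p * (1 - a)) = (p : EReal) := by
  have h : 1 - a ≠ 0 := sub_ne_zero.mpr ha.symm
  simp [gam, ha, h]

theorem exists_fixed {a : ℝ} (b : ℝ) (ha : a ≠ 1) : ∃ p : ℝ, b = p * (1 - a) := by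
  have h : 1 - a ≠ 0 := sub_ne_zero.mpr ha.symm
  exact ⟨b / (1 - a), by field_simp⟩

theorem le_gam_of_lt_one {a b c : ℝ} (ha : a < 1) (h : c * (1 - a) ≤ b) :
    (c : EReal) ≤ gam a b := by
  obtain ⟨p, rfl⟩ := exists_fixed b ha.ne
  rw [gam_of_fixed p ha.ne, EReal.coe_le_coe_iff]
  exact le_of_mul_le_mul_right h (by linarith)

theorem gam_le_of_lt_one {a b c : ℝ} (ha : a < 1) (h : b ≤ c * (1 - a)) :
    gam a b ≤ (c : EReal) := by
  obtain ⟨p, rfl⟩ := exists_fixed b ha.ne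
  rw [gam_of_fixed p ha.ne, EReal.coe_le_coe_iff]
  exact le_of_mul_le_mul_right h (by linarith)

/-- The inequality `f(c) < c` is strict so as to exclude the identity, for which `gam` is `⊥`. -/
theorem le_gam_of_one_le {a b c : ℝ} (ha : 1 ≤ a) (h : b < c * (1 - a)) :
    (c : EReal) ≤ gam a b := by
  rcases ha.eq_or_lt with rfl | ha
  · rw [gam_one_of_neg (by linarith)]
    exact le_top
  · obtain ⟨p, rfl⟩ := exists_fixed b ha.ne'
    rw [gam_of_fixed p ha.ne', EReal.coe_le_coe_iff]
    nlinarith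

theorem gam_le_of_one_le {a b c : ℝ} (ha : 1 ≤ a) (h : c * (1 - a) ≤ b) :
    gam a b ≤ (c : EReal) := by
  rcases ha.eq_or_lt with rfl | ha
  · rw [gam_one_of_nonneg (by linarith)]
    exact bot_le
  · obtain ⟨p, rfl⟩ := exists_fixed b ha.ne'
    rw [gam_of_fixed p ha.ne', EReal.coe_le_coe_iff]
    nlinarith

/-- Relations between `γ(fᵢ)`, `γ(fⱼ)` and `γ(fⱼ ∘ fᵢ)` for monotone nondecreasing,
non-identity linear functions `fᵢ(x) = aᵢx + bᵢ`, `fⱼ(x) = aⱼx + bⱼ`; note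
`fⱼ ∘ fᵢ (x) = (aⱼ aᵢ) x + (aⱼ bᵢ + bⱼ)`. -/
theorem stmt10 (ai bi aj bj : ℝ) (hai : 0 ≤ ai) (haj : 0 ≤ aj)
    (hnidi : (ai, bi) ≠ (1, 0)) (hnidj : (aj, bj) ≠ (1, 0)) :
    (gam ai bi = gam aj bj → (aj * ai, aj * bi + bj) ≠ (1, 0) →
      gam (aj * ai) (aj * bi + bj) = gam ai bi ∧
      gam (aj * ai) (aj * bi + bj) = gam aj bj) ∧
    (gam ai bi < gam aj bj → 1 ≤ ai → 1 ≤ aj →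
      gam ai bi ≤ gam (aj * ai) (aj * bi + bj) ∧
      gam (aj * ai) (aj * bi + bj) ≤ gam aj bj) ∧
    (gam ai bi < gam aj bj → ai < 1 → aj < 1 →
      gam ai bi ≤ gam (aj * ai) (aj * bi + bj) ∧
      gam (aj * ai) (aj * bi + bj) ≤ gam aj bj) ∧
    (gam ai bi < gam aj bj → ai < 1 → 1 ≤ aj → 1 ≤ ai * aj →
      gam aj bj ≤ gam (aj * ai) (aj * bi + bj)) ∧
    (gam ai bi < gam aj bj → ai < 1 → 1 ≤ aj → ai * aj < 1 →
      gam (aj * ai) (aj * bi + bj) ≤ gam ai bi) ∧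
    (gam ai bi < gam aj bj → 1 ≤ ai → aj < 1 → 1 ≤ ai * aj →
      gam (aj * ai) (aj * bi + bj) ≤ gam ai bi) ∧
    (gam ai bi < gam aj bj → 1 ≤ ai → aj < 1 → ai * aj < 1 →
      gam aj bj ≤ gam (aj * ai) (aj * bi + bj)) := by
  have hbi : ai = 1 → bi ≠ 0 := by
    rintro rfl rfl
    exact hnidi rfl
  have hbj : aj = 1 → bj ≠ 0 := by
    rintro rfl rfl
    exact hnidj rfl
  clear hnidi hnidj
  by_cases hi : ai = 1
  · subst hi
    have hbi0 := hbi rfl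
    rw [mul_one, one_mul]
    by_cases hj : aj = 1
    · -- Two translations: `γ(fᵢ) < γ(fⱼ)` forces the values `⊥` and `⊤`.
      subst hj
      have hbj0 := hbj rfl
      rw [one_mul]
      refine ⟨fun h _ => ?_, fun h _ _ => ?_, fun _ h => absurd h (lt_irrefl _),
        fun _ h => absurd h (lt_irrefl _), fun _ h => absurd h (lt_irrefl _),
        fun _ _ h => absurd h (lt_irrefl _), fun _ _ h => absurd h (lt_irrefl _)⟩
      · rcases lt_or_gt_of_ne hbi0 with hi | hi <;> rcases lt_or_gt_of_ne hbj0 with hj | hj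
        · simp [gam_one_of_neg hi, gam_one_of_neg hj, gam_one_of_neg (add_neg hi hj)]
        · simp [gam_one_of_neg hi, gam_one_of_nonneg hj.le] at h
        · simp [gam_one_of_nonneg hi.le, gam_one_of_neg hj] at h
        · simp [gam_one_of_nonneg hi.le, gam_one_of_nonneg hj.le,
            gam_one_of_nonneg (add_pos hi hj).le]
      · rcases lt_or_gt_of_ne hbi0 with hi | hi
        · simp [gam_one_of_neg hi] at h
        · rcases lt_or_gt_of_ne hbj0 with hj | hj
          · simp [gam_one_of_nonneg hi.le, gam_one_of_neg hj]
          · simp [gam_one_of_nonneg hj.le] at h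
    · obtain ⟨q, rfl⟩ := exists_fixed bj hj
      rw [gam_of_fixed q hj]
      rcases lt_or_gt_of_ne hbi0 with hb | hb
      · simp [gam_one_of_neg hb]
      · rw [gam_one_of_nonneg hb.le]
        have hm : 0 ≤ aj * bi := mul_nonneg haj hb.le
        refine ⟨fun h => absurd h.symm (EReal.coe_ne_bot q), fun _ _ h => ⟨bot_le, ?_⟩,
          fun _ h => absurd h (lt_irrefl _), fun _ h => absurd h (lt_irrefl _),
          fun _ h => absurd h (lt_irrefl _), fun _ _ h h' => absurd h h'.not_gt,
          fun _ _ h _ => ?_⟩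
        · exact gam_le_of_one_le h (by linarith)
        · exact le_gam_of_lt_one h (by linarith)
  · obtain ⟨p, rfl⟩ := exists_fixed bi hi
    rw [gam_of_fixed p hi]
    by_cases hj : aj = 1
    · subst hj
      have hbj0 := hbj rfl
      rw [one_mul, one_mul, mul_one]
      rcases lt_or_gt_of_ne hbj0 with hb | hb
      · rw [gam_one_of_neg hb]
        refine ⟨fun h => absurd h (EReal.coe_ne_top p), fun _ h _ => ⟨?_, le_top⟩,
          fun _ _ h => absurd h (lt_irrefl _), fun _ h _ h' => absurd h h'.not_gt,
          fun _ h _ _ => ?_, fun _ _ h => absurd h (lt_irrefl _),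
          fun _ _ h => absurd h (lt_irrefl _)⟩
        · exact le_gam_of_one_le h (by linarith)
        · exact gam_le_of_lt_one h (by linarith)
      · simp [gam_one_of_nonneg hb.le]
    · obtain ⟨q, rfl⟩ := exists_fixed bj hj
      rw [gam_of_fixed q hj, mul_comm ai aj]
      simp only [EReal.coe_lt_coe_iff, EReal.coe_eq_coe_iff]
      refine ⟨?_, fun h h1 h2 => ?_, fun h h1 h2 => ?_, fun h h1 h2 h3 => ?_,
        fun h h1 h2 h3 => ?_, fun h h1 h2 h3 => ?_, fun h h1 h2 h3 => ?_⟩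
      · rintro rfl hn
        have e : aj * (p * (1 - ai)) + p * (1 - aj) = p * (1 - aj * ai) := by ring
        rw [e] at hn ⊢
        -- Slope `1` together with the fixed point `p` would make the composition the identity.
        have ha : aj * ai ≠ 1 := by
          intro ha
          simp [ha] at hn
        simp [gam_of_fixed p ha]
      all_goals
        -- The difference between intercept and `c (1 - aⱼ aᵢ)` is `(1 - aⱼ) (q - p)` for `c = p`
        -- and `-aⱼ (1 - aᵢ) (q - p)` for `c = q`.
        have hqp : 0 < q - p := sub_pos.mpr h
        have ei : aj * (p * (1 - ai)) + q * (1 - aj) - p * (1 - aj * ai)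
          = (1 - aj) * (q - p) := by ring
        have ej : aj * (p * (1 - ai)) + q * (1 - aj) - q * (1 - aj * ai)
          = -(aj * (1 - ai) * (q - p)) := by ring
      · have h1' : 0 ≤ aj * (ai - 1) * (q - p) :=
          mul_nonneg (mul_nonneg haj (by linarith)) hqp.le
        have h2' : 0 < (aj - 1) * (q - p) :=
          mul_pos (sub_pos.mpr (lt_of_le_of_ne h2 (Ne.symm hj))) hqp
        have h3 : 1 ≤ aj * ai := by nlinarith
        exact ⟨le_gam_of_one_le h3 (by linarith), gam_le_of_one_le h3 (by linarith)⟩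
      · have h1' : 0 ≤ aj * (1 - ai) * (q - p) :=
          mul_nonneg (mul_nonneg haj (by linarith)) hqp.le
        have h2' : 0 ≤ (1 - aj) * (q - p) := mul_nonneg (by linarith) hqp.le
        have h3 : aj * ai < 1 := by nlinarith
        exact ⟨le_gam_of_lt_one h3 (by linarith), gam_le_of_lt_one h3 (by linarith)⟩
      · have h1' : 0 < aj * (1 - ai) * (q - p) :=
          mul_pos (mul_pos (by linarith) (by linarith)) hqp
        exact le_gam_of_one_le h3 (by linarith)
      · have h2' : 0 ≤ (aj - 1) * (q - p) := mul_nonneg (by linarith) hqp.le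
        exact gam_le_of_lt_one h3 (by linarith)
      · have h2' : 0 ≤ (1 - aj) * (q - p) := mul_nonneg (by linarith) hqp.le
        exact gam_le_of_one_le h3 (by linarith)
      · have h1' : 0 ≤ aj * (ai - 1) * (q - p) :=
          mul_nonneg (mul_nonneg haj (by linarith)) hqp.le
        exact le_gam_of_lt_one h3 (by linarith)
end

section
/- Let f_i(x) = a_i x + b_i (i = 1, 2, 3) be monotone nondecreasing linear functions, none of which is the identity, with 0 ≤ a_1, a_3 < 1, a_2 ≥ 1, and a_1·a_2·a_3 < 1. If γ(f_1) ≥ γ(f_2) ≥ γ(f_3), then for every x ∈ ℝ, f_3∘f_2∘f_1(x) ≤ max{ f_2∘f_1∘f_3(x), f_1∘f_3∘f_2(x) }. -/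
lemma gam_of_ne {a b : ℝ} (h : a ≠ 1) : gam a b = ((b / (1 - a) : ℝ) : EReal) := if_neg h

/-- For non-identity monotone linear `fᵢ(x) = aᵢx + bᵢ` with `0 ≤ a₁, a₃ < 1`,
`a₂ ≥ 1`, `a₁a₂a₃ < 1` and `γ(f₁) ≥ γ(f₂) ≥ γ(f₃)`:
`f₃∘f₂∘f₁ ≤ max (f₂∘f₁∘f₃) (f₁∘f₃∘f₂)` pointwise. -/
theorem stmt15 (a1 b1 a2 b2 a3 b3 : ℝ)
    (ha1 : 0 ≤ a1) (ha1' : a1 < 1) (ha3 : 0 ≤ a3) (ha3' : a3 < 1) (ha2 : 1 ≤ a2)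
    (hprod : a1 * a2 * a3 < 1)
    (hn1 : (a1, b1) ≠ (1, 0)) (hn2 : (a2, b2) ≠ (1, 0)) (hn3 : (a3, b3) ≠ (1, 0))
    (h21 : gam a2 b2 ≤ gam a1 b1) (h32 : gam a3 b3 ≤ gam a2 b2) :
    ∀ x : ℝ,
      a3 * (a2 * (a1 * x + b1) + b2) + b3 ≤
        max (a2 * (a1 * (a3 * x + b3) + b1) + b2)
          (a1 * (a3 * (a2 * x + b2) + b3) + b1) := by
  have h1 : a1 ≠ 1 := ha1'.ne
  have h3 : a3 ≠ 1 := ha3'.ne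
  rw [gam_of_ne h1] at h21
  rw [gam_of_ne h3] at h32
  have h2 : a2 ≠ 1 := by
    rintro rfl
    rw [gam, if_pos rfl] at h21 h32
    split_ifs at h21 h32 <;> simp at h21 h32
  rw [gam_of_ne h2, EReal.coe_le_coe_iff] at h21 h32
  obtain ⟨g1, hg1⟩ : ∃ g, g = b1 / (1 - a1) := ⟨_, rfl⟩
  obtain ⟨g2, hg2⟩ : ∃ g, g = b2 / (1 - a2) := ⟨_, rfl⟩
  obtain ⟨g3, hg3⟩ : ∃ g, g = b3 / (1 - a3) := ⟨_, rfl⟩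
  rw [← hg1, ← hg2] at h21
  rw [← hg2, ← hg3] at h32
  rw [eq_div_iff (sub_ne_zero.mpr h1.symm)] at hg1
  rw [eq_div_iff (sub_ne_zero.mpr h2.symm)] at hg2
  rw [eq_div_iff (sub_ne_zero.mpr h3.symm)] at hg3
  subst hg1 hg2 hg3
  intro x
  have hp : 0 ≤ g1 - g2 := sub_nonneg.mpr h21
  have hq : 0 ≤ g2 - g3 := sub_nonneg.mpr h32
  have hc1 : 0 < 1 - a1 := sub_pos.mpr ha1'
  have hc3 : 0 < 1 - a3 := sub_pos.mpr ha3'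
  have key : 0 ≤ a2 * (1 - a1) * (g1 - g2) + (1 - a1 * a2) * (g2 - g3) ∨
      0 ≤ (1 - a2 * a3) * (g1 - g2) + (1 - a3) * (g2 - g3) := by
    rcases le_or_gt (a1 * a2) 1 with h | h
    · left
      have h' : 0 ≤ 1 - a1 * a2 := sub_nonneg.mpr h
      positivity
    · by_contra! hneg
      obtain ⟨hD1, hD2⟩ := hneg
      have e1 := mul_neg_of_pos_of_neg hc3 hD1
      have e2 := mul_neg_of_pos_of_neg (sub_pos.mpr h) hD2
      have e3 : 0 ≤ (a2 - 1) * (1 - a1 * a2 * a3) * (g1 - g2) :=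
        mul_nonneg (mul_nonneg (sub_nonneg.mpr ha2) (sub_pos.mpr hprod).le) hp
      linarith
  rcases key with h | h
  · apply le_max_of_le_left
    linarith [mul_nonneg hc3.le h]
  · apply le_max_of_le_right
    linarith [mul_nonneg hc1.le h]
end
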